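/- Let g : ℝⁿ × ℝᵏ → ℝ be twice continuously differentiable in a neighborhood of a point (x̄, θ̄). Suppose that the partial derivative of g with respect to the second variable vanishes at (x̄, θ̄) (i.e., Dg(x̄, θ̄)(0, w) = 0 for all w ∈ ℝᵏ), and that the partial Hessian of g in the second variable at (x̄, θ̄) is positive definite (i.e., D²g(x̄, θ̄)((0, w), (0, w)) > 0 for all w ≠ 0). Then there exist open neighborhoods U of x̄ and V of θ̄ and a continuously differentiable map h : ℝⁿ → ℝᵏ with h(x̄) = θ̄ such that for every x ∈ U one has h(x) ∈ V and h(x) is the unique minimizer of θ ↦ g(x, θ) over V (that is, g(x, h(x)) < g(x, θ) for all θ ∈ V with θ ≠ h(x)). -/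

import Mathlib

/-!
The equation `∂g/∂θ = 0` defines a smooth family of critical points `θ = h x` through `(x₀, θ₀)`:
the partial Hessian is coercive, hence invertible by Lax–Milgram, and the implicit function theorem
applies. Coercivity at the single point `(x₀, θ₀)` and strict differentiability of `∂g/∂θ` make
`θ ↦ ∂g/∂θ (x, θ)` strictly monotone on one ball around `θ₀` that works for all `x` near `x₀`. A
critical point of a function with strictly monotone derivative on a convex set is its unique
minimizer there. Finally `h` is cut off by a bump function to make it globally smooth.
-/

open Filter Metric Set Topology

section Coercive

variable {V : Type*} [NormedAddCommGroup V]

theorem isCoercive_of_forall_pos [NormedSpace ℝ V] [FiniteDimensional ℝ V]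
    {B : V →L[ℝ] V →L[ℝ] ℝ} (hB : ∀ v, v ≠ 0 → 0 < B v v) : IsCoercive B := by
  have hcont : ContinuousOn (fun v ↦ B v v) (sphere 0 1) := by fun_prop
  obtain ⟨c, hc, hsphere⟩ := (isCompact_sphere (0 : V) 1).exists_forall_le' hcont
    fun v hv ↦ hB v (ne_zero_of_mem_unit_sphere ⟨v, hv⟩)
  refine ⟨c, hc, fun v ↦ ?_⟩
  obtain rfl | hv := eq_or_ne v 0
  · simp
  have hv' : ‖v‖ ≠ 0 := norm_ne_zero_iff.2 hv
  calc c * ‖v‖ * ‖v‖ ≤ B (‖v‖⁻¹ • v) (‖v‖⁻¹ • v) * ‖v‖ * ‖v‖ := by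
        gcongr
        exact hsphere _ (by simp [norm_smul, hv'])
    _ = B v v := by
        simp only [map_smul, smul_apply, smul_eq_mul]
        field_simp

theorem isInvertible_of_isCoercive [InnerProductSpace ℝ V] [CompleteSpace V]
    {B : V →L[ℝ] V →L[ℝ] ℝ} (hB : IsCoercive B) : B.IsInvertible := by
  refine ⟨hB.continuousLinearEquivOfBilin.trans
    (InnerProductSpace.toDual ℝ V).toContinuousLinearEquiv, ?_⟩
  ext v w
  exact hB.continuousLinearEquivOfBilin_apply v w

end Coercive

section StrictlyMonotone

variable {V : Type*} [NormedAddCommGroup V] [NormedSpace ℝ V]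

/-- A map `T : V → V*` into the dual is strictly monotone on `s` if `⟨T b - T a, b - a⟩ > 0` for
distinct `a, b ∈ s`. For `T` the derivative of `f`, this is the first-order form of strict
convexity of `f`. -/
def IsStrictlyMonotoneOn (T : V → V →L[ℝ] ℝ) (s : Set V) : Prop :=
  ∀ ⦃a⦄, a ∈ s → ∀ ⦃b⦄, b ∈ s → a ≠ b → 0 < (T b - T a) (b - a)

theorem IsStrictlyMonotoneOn.mono {T : V → V →L[ℝ] ℝ} {s t : Set V}
    (hT : IsStrictlyMonotoneOn T t) (hst : s ⊆ t) : IsStrictlyMonotoneOn T s :=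
  fun _ ha _ hb ↦ hT (hst ha) (hst hb)

theorem IsStrictlyMonotoneOn.lt_of_hasFDerivAt {f : V → ℝ} {f' : V → V →L[ℝ] ℝ} {s : Set V}
    (hmono : IsStrictlyMonotoneOn f' s) (hs : Convex ℝ s) (hf : ∀ z ∈ s, HasFDerivAt f (f' z) z)
    {a b : V} (ha : a ∈ s) (hb : b ∈ s) (hcrit : f' a = 0) (hab : a ≠ b) : f a < f b := by
  set w := b - a with hw
  have hmem : ∀ t ∈ Icc (0 : ℝ) 1, a + t • w ∈ s := fun t ht ↦ hs.add_smul_sub_mem ha hb ht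
  have hderiv : ∀ t ∈ Icc (0 : ℝ) 1, HasDerivAt (fun t ↦ f (a + t • w)) (f' (a + t • w) w) t := by
    intro t ht
    have hline : HasDerivAt (fun t : ℝ ↦ a + t • w) w t := by
      simpa using ((hasDerivAt_id t).smul_const w).const_add a
    exact (hf _ (hmem t ht)).comp_hasDerivAt t hline
  have hpos : ∀ t ∈ Ioo (0 : ℝ) 1, 0 < f' (a + t • w) w := by
    intro t ht
    have hne : a ≠ a + t • w := by simp [hw, ht.1.ne', sub_ne_zero.2 hab.symm]
    have h := hmono ha (hmem t (Ioo_subset_Icc_self ht)) hne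
    rw [hcrit, sub_zero, add_sub_cancel_left, map_smul, smul_eq_mul] at h
    exact pos_of_mul_pos_right h ht.1.le
  have hstrict : StrictMonoOn (fun t : ℝ ↦ f (a + t • w)) (Icc 0 1) := by
    refine strictMonoOn_of_deriv_pos (convex_Icc 0 1)
      (fun t ht ↦ (hderiv t ht).continuousAt.continuousWithinAt) fun t ht ↦ ?_
    rw [interior_Icc] at ht
    rw [(hderiv t (Ioo_subset_Icc_self ht)).deriv]
    exact hpos t ht
  simpa [hw] using hstrict (left_mem_Icc.2 zero_le_one) (right_mem_Icc.2 zero_le_one) zero_lt_one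

end StrictlyMonotone

section Extension

variable {E F : Type*} [NormedAddCommGroup E] [NormedSpace ℝ E] [HasContDiffBump E]
  [NormedAddCommGroup F] [NormedSpace ℝ F]

theorem exists_contDiff_eventuallyEq {m : ℕ} {f : E → F} {x₀ : E} (hf : ContDiffAt ℝ m f x₀) :
    ∃ h : E → F, ContDiff ℝ m h ∧ h =ᶠ[𝓝 x₀] f := by
  obtain ⟨ρ, hρ, hfρ⟩ := eventually_nhds_iff_ball.1 (hf.eventually (by simp))
  let b : ContDiffBump x₀ := ⟨ρ / 4, ρ / 2, by positivity, by linarith⟩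
  refine ⟨fun x ↦ b x • f x, contDiff_iff_contDiffAt.2 fun x ↦ ?_, ?_⟩
  · by_cases hx : x ∈ ball x₀ ρ
    · exact b.contDiffAt.smul (hfρ x hx)
    · have hx' : x ∉ tsupport b := by
        rw [b.tsupport_eq]
        exact fun h ↦ hx (closedBall_subset_ball (half_lt_self hρ) h)
      refine (contDiffAt_const (c := (0 : F))).congr_of_eventuallyEq ?_
      filter_upwards [notMem_tsupport_iff_eventuallyEq.1 hx'] with y hy
      simp [hy]
  · filter_upwards [b.eventuallyEq_one] with x hx
    simp [hx]

end Extension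

section PartialDerivative

variable {E₁ E₂ G : Type*} [NormedAddCommGroup E₁] [NormedSpace ℝ E₁]
  [NormedAddCommGroup E₂] [NormedSpace ℝ E₂] [NormedAddCommGroup G] [NormedSpace ℝ G]

/-- The partial Fréchet derivative of `g` in the second variable. It is the restriction of the total
derivative, so it has junk value `0` wherever `g` is not jointly differentiable. Iterating it gives
the partial Hessian `fderivSnd (fderivSnd g)`. -/
noncomputable def fderivSnd (g : E₁ × E₂ → G) (p : E₁ × E₂) : E₂ →L[ℝ] G :=
  fderiv ℝ g p ∘L .inr ℝ E₁ E₂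

theorem hasFDerivAt_fderivSnd {g : E₁ × E₂ → G} {x : E₁} {θ : E₂}
    (hg : DifferentiableAt ℝ g (x, θ)) :
    HasFDerivAt (fun θ ↦ g (x, θ)) (fderivSnd g (x, θ)) θ :=
  hg.hasFDerivAt.comp θ (hasFDerivAt_prodMk_right x θ)

theorem contDiffAt_fderivSnd {m n : WithTop ℕ∞} {g : E₁ × E₂ → G} {p : E₁ × E₂}
    (hg : ContDiffAt ℝ n g p) (hmn : m + 1 ≤ n) : ContDiffAt ℝ m (fderivSnd g) p :=
  (hg.fderiv_right hmn).clm_comp contDiffAt_const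

theorem fderivSnd_fderivSnd_apply {g : E₁ × E₂ → G} {p : E₁ × E₂}
    (hg : DifferentiableAt ℝ (fderiv ℝ g) p) (v w : E₂) :
    fderivSnd (fderivSnd g) p v w = fderiv ℝ (fderiv ℝ g) p (0, v) (0, w) := by
  have h : HasFDerivAt (fderivSnd g) _ p := hg.hasFDerivAt.clm_comp (hasFDerivAt_const _ p)
  simp [fderivSnd, h.fderiv]

theorem isCoercive_fderivSnd_fderivSnd [FiniteDimensional ℝ E₂] {g : E₁ × E₂ → ℝ} {p : E₁ × E₂}
    (hg : ContDiffAt ℝ 2 g p)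
    (hpos : ∀ w : E₂, w ≠ 0 → 0 < fderiv ℝ (fderiv ℝ g) p (0, w) (0, w)) :
    IsCoercive (fderivSnd (fderivSnd g) p) := by
  have hdiff : DifferentiableAt ℝ (fderiv ℝ g) p :=
    (hg.fderiv_right one_add_one_eq_two.le).differentiableAt one_ne_zero
  refine isCoercive_of_forall_pos fun w hw ↦ ?_
  rw [fderivSnd_fderivSnd_apply hdiff]
  exact hpos w hw

theorem exists_contDiff_implicitFunction [CompleteSpace E₁] [CompleteSpace E₂] [CompleteSpace G]
    [HasContDiffBump E₁] {m : ℕ} (hm : m ≠ 0) {F : E₁ × E₂ → G} {x₀ : E₁} {θ₀ : E₂}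
    (hF : ContDiffAt ℝ m F (x₀, θ₀)) (hinv : (fderivSnd F (x₀, θ₀)).IsInvertible) :
    ∃ h : E₁ → E₂, ContDiff ℝ m h ∧ h x₀ = θ₀ ∧ ∀ᶠ x in 𝓝 x₀, F (x, h x) = F (x₀, θ₀) := by
  have hm' : (m : WithTop ℕ∞) ≠ 0 := mod_cast hm
  obtain ⟨h, hh, heq⟩ := exists_contDiff_eventuallyEq (hF.contDiffAt_implicitFunction hm' hinv)
  refine ⟨h, hh, heq.eq_of_nhds.trans (hF.implicitFunction_apply_self hm' hinv), ?_⟩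
  filter_upwards [heq, hF.eventually_apply_implicitFunction hm' hinv] with x hx hFx
  rwa [hx]

theorem exists_nhds_isStrictlyMonotoneOn {F : E₁ × E₂ → E₂ →L[ℝ] ℝ}
    {F' : E₁ × E₂ →L[ℝ] E₂ →L[ℝ] ℝ} {p : E₁ × E₂} (hF : HasStrictFDerivAt F F' p)
    (hcoer : IsCoercive (F' ∘L .inr ℝ E₁ E₂)) :
    ∃ s ∈ 𝓝 p, ∀ x, IsStrictlyMonotoneOn (fun θ ↦ F (x, θ)) {θ | (x, θ) ∈ s} := by
  obtain ⟨c, hc, hcoer⟩ := hcoer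
  have happrox := hF.isLittleO.def (half_pos hc)
  rw [nhds_prod_eq] at happrox
  obtain ⟨s, hs, hsF⟩ := (eventually_prod_self_iff' (r := fun q : (E₁ × E₂) × (E₁ × E₂) ↦
    ‖F q.1 - F q.2 - F' (q.1 - q.2)‖ ≤ c / 2 * ‖q.1 - q.2‖)).1 happrox
  refine ⟨s, hs, fun x a ha b hb hab ↦ ?_⟩
  set w := b - a with hw
  have hnorm : 0 < ‖w‖ := norm_pos_iff.2 (sub_ne_zero.2 hab.symm)
  have herror : ‖F (x, b) - F (x, a) - F' (0, w)‖ ≤ c / 2 * ‖w‖ := by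
    simpa [Prod.norm_def, hw] using hsF _ hb _ ha
  have hlower : -(c / 2 * ‖w‖ * ‖w‖) ≤ (F (x, b) - F (x, a) - F' (0, w)) w :=
    neg_le_of_abs_le (ContinuousLinearMap.le_of_opNorm_le _ herror w)
  calc 0 < c / 2 * ‖w‖ * ‖w‖ := by positivity
    _ = c * ‖w‖ * ‖w‖ + -(c / 2 * ‖w‖ * ‖w‖) := by ring
    _ ≤ F' (0, w) w + (F (x, b) - F (x, a) - F' (0, w)) w :=
        add_le_add (hcoer w) hlower
    _ = (F (x, b) - F (x, a)) w := by simp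

theorem exists_ball_lt_of_fderivSnd_eq_zero {g : E₁ × E₂ → ℝ} {x₀ : E₁} {θ₀ : E₂}
    (hg : ContDiffAt ℝ 2 g (x₀, θ₀)) (hcoer : IsCoercive (fderivSnd (fderivSnd g) (x₀, θ₀))) :
    ∃ r > 0, ∀ x ∈ ball x₀ r, ∀ a ∈ ball θ₀ r, fderivSnd g (x, a) = 0 →
      ∀ θ ∈ ball θ₀ r, θ ≠ a → g (x, a) < g (x, θ) := by
  have hF : ContDiffAt ℝ 1 (fderivSnd g) (x₀, θ₀) :=
    contDiffAt_fderivSnd hg one_add_one_eq_two.le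
  obtain ⟨s, hs, hmono⟩ :=
    exists_nhds_isStrictlyMonotoneOn (hF.hasStrictFDerivAt one_ne_zero) hcoer
  have hdiff : ∀ᶠ p in 𝓝 (x₀, θ₀), DifferentiableAt ℝ g p :=
    (hg.eventually (by simp)).mono fun p hp ↦ hp.differentiableAt two_ne_zero
  obtain ⟨r, hr, hball⟩ := Metric.mem_nhds_iff.1 (inter_mem hs hdiff)
  rw [← ball_prod_same] at hball
  refine ⟨r, hr, fun x hx a ha hcrit θ hθ hne ↦ ?_⟩
  have hmonoBall : IsStrictlyMonotoneOn (fun θ ↦ fderivSnd g (x, θ)) (ball θ₀ r) :=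
    (hmono x).mono fun z hz ↦ (hball ⟨hx, hz⟩).1
  exact hmonoBall.lt_of_hasFDerivAt (convex_ball θ₀ r)
    (fun z hz ↦ hasFDerivAt_fderivSnd (hball ⟨hx, hz⟩).2) ha hθ hcrit hne.symm

end PartialDerivative

theorem stmt0_general {E₁ E₂ : Type*} [NormedAddCommGroup E₁] [NormedSpace ℝ E₁] [CompleteSpace E₁]
    [HasContDiffBump E₁] [NormedAddCommGroup E₂] [InnerProductSpace ℝ E₂] [CompleteSpace E₂]
    {m : ℕ} (hm : m ≠ 0) {g : E₁ × E₂ → ℝ} {x₀ : E₁} {θ₀ : E₂}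
    (hg : ContDiffAt ℝ (m + 1) g (x₀, θ₀)) (hcrit : fderivSnd g (x₀, θ₀) = 0)
    (hcoer : IsCoercive (fderivSnd (fderivSnd g) (x₀, θ₀))) :
    ∃ (U : Set E₁) (V : Set E₂) (h : E₁ → E₂),
      IsOpen U ∧ x₀ ∈ U ∧ IsOpen V ∧ θ₀ ∈ V ∧ ContDiff ℝ m h ∧ h x₀ = θ₀ ∧
      ∀ x ∈ U, h x ∈ V ∧ ∀ θ ∈ V, θ ≠ h x → g (x, h x) < g (x, θ) := by
  have hg₂ : ContDiffAt ℝ 2 g (x₀, θ₀) := hg.of_le (by exact_mod_cast (by lia : 2 ≤ m + 1))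
  obtain ⟨h, hh, hx₀, hconst⟩ := exists_contDiff_implicitFunction hm
    (contDiffAt_fderivSnd hg le_rfl) (isInvertible_of_isCoercive hcoer)
  obtain ⟨r, hr, hmin⟩ := exists_ball_lt_of_fderivSnd_eq_zero hg₂ hcoer
  have hxball : ∀ᶠ x in 𝓝 x₀, x ∈ ball x₀ r := ball_mem_nhds x₀ hr
  have hball : ∀ᶠ x in 𝓝 x₀, h x ∈ ball θ₀ r :=
    hh.continuous.continuousAt.eventually_mem (hx₀ ▸ ball_mem_nhds _ hr)
  obtain ⟨U, hU, hUo, hxU⟩ := _root_.eventually_nhds_iff.1 (hxball.and (hball.and hconst))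
  refine ⟨U, ball θ₀ r, h, hUo, hxU, isOpen_ball, mem_ball_self hr, hh, hx₀, fun x hx ↦ ?_⟩
  obtain ⟨hxr, hhr, hcritx⟩ := hU x hx
  exact ⟨hhr, hmin x hxr (h x) hhr (hcritx.trans hcrit)⟩

/-- existence of a smooth local minimizer map / projection function.
If `g` is `C²` near `(x₀, θ₀)`, the partial derivative of `g` in the second variable
vanishes at `(x₀, θ₀)`, and the partial Hessian in the second variable at `(x₀, θ₀)` is
positive definite, then there are open neighbourhoods `U ∋ x₀` and `V ∋ θ₀` and a `C¹`
map `h` with `h x₀ = θ₀` such that for every `x ∈ U`, `h x` is the unique minimizer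
of `θ ↦ g (x, θ)` over `V`. -/
theorem stmt0 (n k : ℕ)
    (g : EuclideanSpace ℝ (Fin n) × EuclideanSpace ℝ (Fin k) → ℝ)
    (x₀ : EuclideanSpace ℝ (Fin n)) (θ₀ : EuclideanSpace ℝ (Fin k))
    (hg : ContDiffAt ℝ 2 g (x₀, θ₀))
    (hcrit : ∀ w : EuclideanSpace ℝ (Fin k), fderiv ℝ g (x₀, θ₀) (0, w) = 0)
    (hpos : ∀ w : EuclideanSpace ℝ (Fin k), w ≠ 0 →
      0 < fderiv ℝ (fderiv ℝ g) (x₀, θ₀) (0, w) (0, w)) :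
    ∃ (U : Set (EuclideanSpace ℝ (Fin n))) (V : Set (EuclideanSpace ℝ (Fin k)))
      (h : EuclideanSpace ℝ (Fin n) → EuclideanSpace ℝ (Fin k)),
      IsOpen U ∧ x₀ ∈ U ∧ IsOpen V ∧ θ₀ ∈ V ∧
      ContDiff ℝ 1 h ∧ h x₀ = θ₀ ∧
      ∀ x ∈ U, h x ∈ V ∧ ∀ θ ∈ V, θ ≠ h x → g (x, h x) < g (x, θ) := by
  exact_mod_cast stmt0_general one_ne_zero (by simpa [one_add_one_eq_two] using hg)
    (ContinuousLinearMap.ext hcrit) (isCoercive_fderivSnd_fderivSnd hg hpos)
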